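/- Let X^n = (X_1,…,X_n) be i.i.d. with distribution p_X on a finite alphabet X, let J be uniform on [2^{nR_c}] and independent of X^n, and let M be any random variable taking values in [2^{nR}] jointly distributed with (X^n, J). Let T be uniform on [n], independent of everything else, and set V = (M, J, T, Y^{T−1}) for any Y^n satisfying the Markov chain X^n − (M,J) − Y^n. Then nR ≥ H(M) implies R ≥ I(V ; X_T). -/

import Mathlib

open MeasureTheory ProbabilityTheory Real

/-- Shannon entropy (base 2) of a distribution on a finite type. -/
noncomputable def entropy {α : Type*} [Fintype α] [MeasurableSpace α] (μ : Measure α) : ℝ :=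
  -∑ x : α, (μ {x}).toReal * Real.logb 2 (μ {x}).toReal

/-- Shannon mutual information (base 2) between the coordinates of a joint distribution. -/
noncomputable def mutualInfo {α β : Type*} [Fintype α] [MeasurableSpace α]
    [Fintype β] [MeasurableSpace β] (μ : Measure (α × β)) : ℝ :=
  entropy (μ.map Prod.fst) + entropy (μ.map Prod.snd) - entropy μ

/-- The uniform distribution on a finite type. -/
noncomputable def unif (α : Type*) [Fintype α] [MeasurableSpace α] : Measure α :=
  (Fintype.card α : ENNReal)⁻¹ • Measure.count

/-- Discrete measurable structure on `Option`. -/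
instance {α : Type*} : MeasurableSpace (Option α) := ⊤

/-- The prefix y^{t-1} of a sequence y^n, encoded as a function `Fin n → Option X`
revealing exactly the first t coordinates. -/
def prefixOf {X : Type*} {n : ℕ} (y : Fin n → X) (t : Fin n) : Fin n → Option X :=
  fun i => if (i : ℕ) < (t : ℕ) then some (y i) else none

open Classical in
/-- Probability that `f` takes value `a` under the weights `w`. -/
noncomputable def fibW {Ω α : Type*} [Fintype Ω] (w : Ω → ℝ) (f : Ω → α) (a : α) : ℝ :=
  ∑ ω, if f ω = a then w ω else 0

/-- Entropy in nats of the random variable `f` under the weights `w`. -/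
noncomputable def entW {Ω α : Type*} [Fintype Ω] (w : Ω → ℝ) (f : Ω → α) : ℝ :=
  -∑ ω, w ω * Real.log (fibW w f (f ω))

section calculus
variable {Ω α β γ : Type*} [Fintype Ω] {w : Ω → ℝ}

lemma fibW_nonneg (hw : ∀ ω, 0 ≤ w ω) (f : Ω → α) (a : α) : 0 ≤ fibW w f a := by
  classical
  unfold fibW
  exact Finset.sum_nonneg fun ω _ => by split_ifs <;> simp [hw]

lemma fibW_pos (hw : ∀ ω, 0 ≤ w ω) (f : Ω → α) (ω : Ω) (h : 0 < w ω) :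
    0 < fibW w f (f ω) := by
  classical
  unfold fibW
  refine Finset.sum_pos' (fun ω _ => by split_ifs <;> simp [hw]) ⟨ω, Finset.mem_univ _, by simpa using h⟩

lemma fibW_mono (hw : ∀ ω, 0 ≤ w ω) (f : Ω → α) (g : Ω → β) (a : α) (b : β)
    (h : ∀ ω, g ω = b → f ω = a) : fibW w g b ≤ fibW w f a := by
  classical
  unfold fibW
  refine Finset.sum_le_sum fun ω _ => ?_
  by_cases h1 : g ω = b
  · simp [h1, h ω h1]
  · simp only [h1, if_false]; split_ifs <;> simp [hw]

lemma sum_fibW_mul [Fintype α] (f : Ω → α) (F : α → ℝ) :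
    ∑ a, fibW w f a * F a = ∑ ω, w ω * F (f ω) := by
  classical
  unfold fibW
  simp_rw [Finset.sum_mul]
  rw [Finset.sum_comm]
  refine Finset.sum_congr rfl fun ω _ => ?_
  simp [ite_mul]

lemma sum_fibW_pair [Fintype α] (f : Ω → α) (g : Ω → β) (b : β) :
    ∑ a, fibW w (fun ω => (f ω, g ω)) (a, b) = fibW w g b := by
  classical
  unfold fibW
  rw [Finset.sum_comm]
  refine Finset.sum_congr rfl fun ω _ => ?_
  by_cases h : g ω = b <;> simp [h]

lemma entW_mono (hw : ∀ ω, 0 ≤ w ω) (f : Ω → α) (g : Ω → β)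
    (h : ∀ ω ω', g ω = g ω' → f ω = f ω') : entW w f ≤ entW w g := by
  unfold entW
  refine neg_le_neg (Finset.sum_le_sum fun ω _ => ?_)
  rcases (hw ω).eq_or_lt with h0 | h0
  · simp [← h0]
  · refine mul_le_mul_of_nonneg_left (Real.log_le_log (fibW_pos hw g ω h0) ?_) h0.le
    exact fibW_mono hw _ _ _ _ fun ω' => h ω' ω

lemma entW_congr (hw : ∀ ω, 0 ≤ w ω) (f : Ω → α) (g : Ω → β)
    (h : ∀ ω ω', g ω = g ω' ↔ f ω = f ω') : entW w f = entW w g :=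
  le_antisymm (entW_mono hw f g fun a b => (h a b).1) (entW_mono hw g f fun a b => (h a b).2)

lemma entW_add_eq {δ : Type*} (hw : ∀ ω, 0 ≤ w ω) (f : Ω → α) (g : Ω → β) (h : Ω → γ) (k : Ω → δ)
    (H : ∀ ω, 0 < w ω → fibW w f (f ω) * fibW w g (g ω) = fibW w h (h ω) * fibW w k (k ω)) :
    entW w f + entW w g = entW w h + entW w k := by
  unfold entW
  rw [← neg_add, ← neg_add, ← Finset.sum_add_distrib, ← Finset.sum_add_distrib]
  congr 1
  refine Finset.sum_congr rfl fun ω _ => ?_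
  rcases (hw ω).eq_or_lt with h0 | h0
  · simp [← h0]
  · rw [← mul_add, ← mul_add, ← Real.log_mul (fibW_pos hw _ ω h0).ne' (fibW_pos hw _ ω h0).ne',
      ← Real.log_mul (fibW_pos hw _ ω h0).ne' (fibW_pos hw _ ω h0).ne', H ω h0]

/-- Submodularity of entropy. -/
lemma entW_submod [Fintype α] [Fintype β] [Fintype γ] (hw : ∀ ω, 0 ≤ w ω)
    (f : Ω → α) (g : Ω → β) (h : Ω → γ) :
    entW w (fun ω => (f ω, g ω, h ω)) + entW w h ≤
      entW w (fun ω => (f ω, h ω)) + entW w (fun ω => (g ω, h ω)) := by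
  set A := fibW w (fun ω => (f ω, g ω, h ω)) with hA
  set B := fibW w h with hB
  set C := fibW w (fun ω => (f ω, h ω)) with hC
  set D := fibW w (fun ω => (g ω, h ω)) with hD
  have hA0 : ∀ x, 0 ≤ A x := fibW_nonneg hw _
  have hB0 : ∀ x, 0 ≤ B x := fibW_nonneg hw _
  have hC0 : ∀ x, 0 ≤ C x := fibW_nonneg hw _
  have hD0 : ∀ x, 0 ≤ D x := fibW_nonneg hw _
  let G : α × β × γ → ℝ := fun x => C (x.1, x.2.2) * D (x.2.1, x.2.2) / (A x * B x.2.2)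
  have key : ∑ ω, w ω * G (f ω, g ω, h ω) ≤ ∑ ω, w ω := by
    rw [← sum_fibW_mul (fun ω => (f ω, g ω, h ω)) G]
    calc ∑ x, A x * G x ≤ ∑ x : α × β × γ, C (x.1, x.2.2) * D (x.2.1, x.2.2) / B x.2.2 := by
          refine Finset.sum_le_sum fun x _ => ?_
          rcases (hA0 x).eq_or_lt with h0 | h0
          · rw [← h0, zero_mul]
            exact div_nonneg (mul_nonneg (hC0 _) (hD0 _)) (hB0 _)
          · refine le_of_eq ?_
            simp only [G]
            rw [← mul_div_assoc, mul_div_mul_left _ _ h0.ne']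
      _ = ∑ c, B c * 1 := by
          rw [Fintype.sum_prod_type]
          simp_rw [Fintype.sum_prod_type]
          rw [Finset.sum_congr rfl fun a _ => Finset.sum_comm, Finset.sum_comm]
          refine Finset.sum_congr rfl fun c _ => ?_
          simp_rw [← Finset.sum_div, ← Finset.mul_sum]
          rw [← Finset.sum_mul, hC, hD, sum_fibW_pair, sum_fibW_pair, mul_one, ← hB]
          exact mul_self_div_self _
      _ = ∑ ω, w ω := by rw [hB, sum_fibW_mul]; simp
  unfold entW
  rw [← neg_add, ← neg_add, ← Finset.sum_add_distrib, ← Finset.sum_add_distrib, neg_le_neg_iff]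
  rw [← sub_nonpos, ← Finset.sum_sub_distrib]
  refine le_trans (Finset.sum_le_sum (g := fun ω => w ω * G (f ω, g ω, h ω) - w ω)
    fun ω _ => ?_) (by rw [Finset.sum_sub_distrib]; linarith)
  rcases (hw ω).eq_or_lt with h0 | h0
  · simp [← h0]
  · have a1 : 0 < A (f ω, g ω, h ω) := fibW_pos hw (fun ω => (f ω, g ω, h ω)) ω h0
    have a2 : 0 < B (h ω) := fibW_pos hw h ω h0
    have a3 : 0 < C (f ω, h ω) := fibW_pos hw (fun ω => (f ω, h ω)) ω h0
    have a4 : 0 < D (g ω, h ω) := fibW_pos hw (fun ω => (g ω, h ω)) ω h0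
    have hl := Real.log_le_sub_one_of_pos (x := G (f ω, g ω, h ω)) (by simp only [G]; positivity)
    have hl2 : Real.log (G (f ω, g ω, h ω)) = Real.log (C (f ω, h ω)) + Real.log (D (g ω, h ω))
        - (Real.log (A (f ω, g ω, h ω)) + Real.log (B (h ω))) := by
      simp only [G]
      rw [Real.log_div (by positivity) (by positivity), Real.log_mul a3.ne' a4.ne',
        Real.log_mul a1.ne' a2.ne']
    rw [hl2] at hl
    nlinarith [mul_le_mul_of_nonneg_left hl h0.le]

lemma fibW_const (c : α) : fibW w (fun _ => c) c = ∑ ω, w ω := by simp [fibW]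

lemma entW_pair_le [Fintype α] [Fintype β] (hw : ∀ ω, 0 ≤ w ω) (h1 : ∑ ω, w ω = 1)
    (f : Ω → α) (g : Ω → β) :
    entW w (fun ω => (f ω, g ω)) ≤ entW w f + entW w g := by
  have := entW_submod hw f g (fun _ => ())
  have e0 : entW w (fun _ : Ω => ()) = 0 := by
    unfold entW; simp [fibW_const, h1]
  rw [e0] at this
  rw [entW_congr hw (fun ω => (f ω, g ω)) (fun ω => (f ω, g ω, ())) (by simp),
    entW_congr hw f (fun ω => (f ω, ())) (by simp), entW_congr hw g (fun ω => (g ω, ())) (by simp)]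
  linarith

/-- Conditional subadditivity. -/
lemma entW_tuple_le {n : ℕ} [Fintype α] [Fintype β] (hw : ∀ ω, 0 ≤ w ω)
    (X : Ω → Fin n → α) (W : Ω → β) :
    entW w (fun ω => (X ω, W ω)) - entW w W ≤
      ∑ t, (entW w (fun ω => (X ω t, W ω)) - entW w W) := by
  classical
  have aux : ∀ s : Finset (Fin n),
      entW w (fun ω => ((fun i => if i ∈ s then some (X ω i) else none : Fin n → Option α), W ω))
        - entW w W ≤ ∑ t ∈ s, (entW w (fun ω => (X ω t, W ω)) - entW w W) := by
    intro s
    induction s using Finset.induction_on with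
    | empty =>
      simp only [Finset.sum_empty, sub_nonpos]
      exact entW_mono hw _ _ (by simp)
    | insert i s hi ih =>
      rw [Finset.sum_insert hi]
      have h1 := entW_submod hw (fun ω => X ω i)
        (fun ω => (fun i => if i ∈ s then some (X ω i) else none : Fin n → Option α)) W
      have h2 : entW w (fun ω => ((fun j => if j ∈ insert i s then some (X ω j) else none :
          Fin n → Option α), W ω)) ≤ entW w (fun ω => (X ω i,
          (fun i => if i ∈ s then some (X ω i) else none : Fin n → Option α), W ω)) := by
        refine entW_mono hw _ _ fun ω ω' h => ?_
        simp only [Prod.mk.injEq] at h ⊢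
        refine ⟨funext fun j => ?_, h.2.2⟩
        by_cases hj : j = i
        · subst hj; simp [h.1]
        · have := congrFun h.2.1 j
          simpa [hj] using this
      linarith
  refine le_trans (le_of_eq ?_) (aux Finset.univ)
  congr 1
  refine entW_congr hw _ _ fun ω ω' => ?_
  simp [funext_iff]

/-- Time-sharing. -/
lemma entW_time {n : ℕ} (hn : 0 < n) (hw : ∀ ω, 0 ≤ w ω) (h1 : ∑ ω, w ω = 1)
    (f' : Ω × Fin n → α) (f : Fin n → Ω → β)
    (h : ∀ ω t ω' t', f' (ω', t') = f' (ω, t) ↔ t' = t ∧ f t ω' = f t ω) :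
    entW (fun x : Ω × Fin n => w x.1 * (n : ℝ)⁻¹) f' =
      Real.log n + (n : ℝ)⁻¹ * ∑ t, entW w (f t) := by
  classical
  have hn' : (0 : ℝ) < n := by exact_mod_cast hn
  have e : ∀ ω t, fibW (fun x : Ω × Fin n => w x.1 * (n : ℝ)⁻¹) f' (f' (ω, t)) =
      fibW w (f t) (f t ω) * (n : ℝ)⁻¹ := by
    intro ω t
    unfold fibW
    rw [Fintype.sum_prod_type, Finset.sum_mul]
    refine Finset.sum_congr rfl fun ω' _ => ?_
    simp only [h]
    by_cases hh : f t ω' = f t ω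
    · rw [Finset.sum_eq_single t] <;> simp +contextual [hh]
    · rw [if_neg hh, zero_mul]
      refine Finset.sum_eq_zero fun t' _ => if_neg fun hc => hh hc.2
  have e2 : ∀ ω t, w ω * (n : ℝ)⁻¹ * Real.log (fibW w (f t) (f t ω) * (n : ℝ)⁻¹) =
      (n : ℝ)⁻¹ * (w ω * Real.log (fibW w (f t) (f t ω))) - (n : ℝ)⁻¹ * Real.log n * w ω := by
    intro ω t
    rcases (hw ω).eq_or_lt with h0 | h0
    · simp [← h0]
    · rw [Real.log_mul (fibW_pos hw _ ω h0).ne' (by positivity), Real.log_inv]; ring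
  unfold entW
  rw [Fintype.sum_prod_type, Finset.sum_comm]
  simp only [e, e2]
  simp only [Finset.sum_sub_distrib, ← Finset.mul_sum, h1, Finset.sum_neg_distrib]
  simp
  field_simp
  ring

/-- Uniform choice among identically distributed coordinates. -/
lemma entW_time_id {n : ℕ} (hn : 0 < n)
    (X : Ω → Fin n → α) (p : α → ℝ) (hp : ∀ t x, fibW w (fun ω => X ω t) x = p x) :
    entW (fun x : Ω × Fin n => w x.1 * (n : ℝ)⁻¹) (fun x => X x.1 x.2) =
      (n : ℝ)⁻¹ * ∑ t, entW w (fun ω => X ω t) := by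
  classical
  have hn' : (0 : ℝ) < n := by exact_mod_cast hn
  have e : ∀ a, fibW (fun x : Ω × Fin n => w x.1 * (n : ℝ)⁻¹) (fun x => X x.1 x.2) a = p a := by
    intro a
    have : ∀ t : Fin n, (∑ ω, if X ω t = a then w ω * (n : ℝ)⁻¹ else 0) = p a * (n : ℝ)⁻¹ := by
      intro t
      rw [← hp t a]
      unfold fibW
      rw [Finset.sum_mul]
      exact Finset.sum_congr rfl fun ω _ => by rw [ite_mul, zero_mul]
    unfold fibW
    rw [Fintype.sum_prod_type, Finset.sum_comm]
    simp only [this]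
    simp
    field_simp
  unfold entW
  rw [Fintype.sum_prod_type, Finset.sum_comm]
  simp only [e, hp]
  rw [Finset.sum_neg_distrib, mul_neg, Finset.mul_sum]
  congr 1
  refine Finset.sum_congr rfl fun t _ => ?_
  rw [Finset.mul_sum]
  exact Finset.sum_congr rfl fun ω _ => by ring

/-- Entropy of a product law. -/
lemma entW_indep_tuple {n : ℕ} (hw : ∀ ω, 0 ≤ w ω)
    (X : Ω → Fin n → α)
    (hp : ∀ x, fibW w X x = ∏ t, fibW w (fun ω => X ω t) (x t)) :
    entW w X = ∑ t, entW w (fun ω => X ω t) := by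
  unfold entW
  rw [Finset.sum_neg_distrib, Finset.sum_comm]
  congr 1
  refine Finset.sum_congr rfl fun ω _ => ?_
  rcases (hw ω).eq_or_lt with h0 | h0
  · simp [← h0]
  · rw [hp, Real.log_prod (fun t _ => (fibW_pos hw (fun ω => X ω t) ω h0).ne'), Finset.mul_sum]

end calculus

section bridge
variable {Ω α : Type*} [Fintype Ω] [MeasurableSpace Ω] [MeasurableSingletonClass Ω]
  [MeasurableSpace α] [MeasurableSingletonClass α]

lemma fibW_bridge (μ : Measure Ω) [IsFiniteMeasure μ] (f : Ω → α) (a : α) :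
    ((μ.map f) {a}).toReal = fibW (fun ω => (μ {ω}).toReal) f a := by
  classical
  rw [Measure.map_apply (measurable_of_finite f) (measurableSet_singleton a)]
  have : f ⁻¹' {a} = ((Finset.univ.filter fun ω => f ω = a : Finset Ω) : Set Ω) := by
    ext; simp
  rw [this, ← sum_measure_singleton, ENNReal.toReal_sum (fun _ _ => measure_ne_top _ _),
    Finset.sum_filter]
  unfold fibW
  exact Finset.sum_congr rfl fun _ _ => by congr

lemma entropy_bridge [Fintype α] (μ : Measure Ω) [IsFiniteMeasure μ] (f : Ω → α) :
    entropy (μ.map f) = entW (fun ω => (μ {ω}).toReal) f / Real.log 2 := by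
  unfold entropy entW
  simp only [fibW_bridge]
  rw [sum_fibW_mul f fun a => Real.logb 2 (fibW (fun ω => (μ {ω}).toReal) f a), neg_div,
    Finset.sum_div]
  congr 1
  refine Finset.sum_congr rfl fun ω _ => ?_
  rw [Real.logb, mul_div_assoc]

end bridge

instance optMeasSing {α : Type*} : MeasurableSingletonClass (Option α) := ⟨fun _ => trivial⟩

lemma unif_isProb (α : Type*) [Fintype α] [Nonempty α] [MeasurableSpace α]
    [MeasurableSingletonClass α] : IsProbabilityMeasure (unif α) := by
  constructor
  unfold unif
  simp [Measure.count_apply_finite]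
  rw [ENNReal.inv_mul_cancel] <;> simp

/-- Converse bound on the compression rate: with X^n i.i.d. ∼ p, J uniform and
independent of X^n, M ∈ [2^{nR}], the Markov chain X^n − (M,J) − Y^n, and T uniform
on [n] with V = (M, J, T, Y^{T−1}), if nR ≥ H(M) then R ≥ I(V ; X_T). -/
theorem stmt_6 {Xty Mty Jty : Type*}
    [Fintype Xty] [MeasurableSpace Xty] [MeasurableSingletonClass Xty]
    [Fintype Mty] [MeasurableSpace Mty] [MeasurableSingletonClass Mty]
    [Fintype Jty] [MeasurableSpace Jty] [MeasurableSingletonClass Jty]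
    {n : ℕ} (hn : 0 < n) (R : ℝ)
    (p : Measure Xty) [IsProbabilityMeasure p]
    (μ : Measure (((Fin n → Xty) × Mty × Jty) × (Fin n → Xty))) [IsProbabilityMeasure μ]
    -- X^n is i.i.d. with distribution p, and J is uniform and independent of X^n
    (hXJ : μ.map (fun ω => (ω.1.1, ω.1.2.2)) = (Measure.pi fun _ => p).prod (unif Jty))
    -- Markov chain X^n − (M,J) − Y^n
    (hMarkov : ∃ κ : Kernel (Mty × Jty) (Fin n → Xty), IsMarkovKernel κ ∧
      μ = (μ.map Prod.fst) ⊗ₘ (κ.comap Prod.snd measurable_snd))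
    -- M takes values in [2^{nR}]
    (hcard : (Fintype.card Mty : ℝ) ≤ 2 ^ ((n : ℝ) * R))
    -- nR ≥ H(M)
    (hH : entropy (μ.map (fun ω => ω.1.2.1)) ≤ (n : ℝ) * R) :
    mutualInfo ((μ.prod (unif (Fin n))).map
        (fun ω => ((ω.1.1.2.1, ω.1.1.2.2, ω.2, prefixOf ω.1.2 ω.2), ω.1.1.1 ω.2))) ≤ R := by
  
  classical
  have hn' : (0 : ℝ) < n := by exact_mod_cast hn
  have : Nonempty (Fin n) := ⟨⟨0, hn⟩⟩
  have hΩ : Nonempty (((Fin n → Xty) × Mty × Jty) × (Fin n → Xty)) := μ.nonempty_of_neZero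
  have : Nonempty Jty := hΩ.map fun ω => ω.1.2.2
  have := unif_isProb (Fin n)
  have := unif_isProb Jty
  set w : (((Fin n → Xty) × Mty × Jty) × (Fin n → Xty)) → ℝ := fun ω => (μ {ω}).toReal with hwdef
  have hw : ∀ ω, 0 ≤ w ω := fun ω => ENNReal.toReal_nonneg
  have hw1 : ∑ ω, w ω = 1 := by
    rw [hwdef, ← ENNReal.toReal_sum (fun _ _ => measure_ne_top _ _), sum_measure_singleton]
    simp
  -- laws
  have lXJ : ∀ x j, fibW w (fun ω => (ω.1.1, ω.1.2.2)) (x, j) =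
      (∏ i, (p {x i}).toReal) * ((unif Jty) {j}).toReal := by
    intro x j
    rw [hwdef, ← fibW_bridge, hXJ, ← Set.singleton_prod_singleton, Measure.prod_prod,
      Measure.pi_singleton, ENNReal.toReal_mul, ENNReal.toReal_prod]
  have hX : μ.map (fun ω => ω.1.1) = Measure.pi fun _ => p := by
    have := congrArg (Measure.map Prod.fst) hXJ
    rw [Measure.map_map (measurable_of_finite _) (measurable_of_finite _)] at this
    simpa [Measure.map_fst_prod, Function.comp_def] using this
  have hJ : μ.map (fun ω => ω.1.2.2) = unif Jty := by
    have := congrArg (Measure.map Prod.snd) hXJ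
    rw [Measure.map_map (measurable_of_finite _) (measurable_of_finite _)] at this
    simpa [Measure.map_snd_prod, Function.comp_def] using this
  have hXt : ∀ t, μ.map (fun ω => ω.1.1 t) = p := by
    intro t
    have := congrArg (Measure.map (fun x : Fin n → Xty => x t)) hX
    rw [Measure.map_map (measurable_of_finite _) (measurable_of_finite _)] at this
    rw [(measurePreserving_eval (fun _ : Fin n => p) t).map_eq] at this
    simpa [Function.comp_def] using this
  have lX : ∀ x, fibW w (fun ω => ω.1.1) x = ∏ i, (p {x i}).toReal := by
    intro x
    rw [hwdef, ← fibW_bridge, hX, Measure.pi_singleton, ENNReal.toReal_prod]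
  have lJ : ∀ j, fibW w (fun ω => ω.1.2.2) j = ((unif Jty) {j}).toReal := by
    intro j
    rw [hwdef, ← fibW_bridge, hJ]
  have lXt : ∀ t x, fibW w (fun ω => ω.1.1 t) x = (p {x}).toReal := by
    intro t x
    rw [hwdef, ← fibW_bridge, hXt]
  obtain ⟨κ, hκ, hμκ⟩ := hMarkov
  have lw : ∀ a y, w (a, y) = fibW w Prod.fst a * ((κ a.2) {y}).toReal := by
    intro a y
    rw [hwdef, ← fibW_bridge]
    have : μ {(a, y)} = (μ.map Prod.fst) {a} * κ a.2 {y} := by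
      conv_lhs => rw [hμκ]
      rw [← Set.singleton_prod_singleton, Measure.compProd_apply_prod (measurableSet_singleton _)
        (measurableSet_singleton _), Measure.restrict_singleton]
      simp
    simp only [this, ENNReal.toReal_mul]
  -- (5) the Markov chain
  have s5 : entW w (fun ω => (ω.1.1, (ω.1.2.1, ω.1.2.2, ω.2))) + entW w (fun ω => ω.1.2) =
      entW w (fun ω => ω.1) + entW w (fun ω => (ω.1.2.1, ω.1.2.2, ω.2)) := by
    refine entW_add_eq hw _ _ _ _ fun ω _ => ?_
    obtain ⟨a, y⟩ := ω
    have e1 : fibW w (fun ω => (ω.1.1, (ω.1.2.1, ω.1.2.2, ω.2))) (a.1, (a.2.1, a.2.2, y)) =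
        w (a, y) := by
      unfold fibW
      rw [Finset.sum_eq_single (a, y)]
      · simp
      · intro b _ hb
        rw [if_neg]
        rintro h
        apply hb
        simp only [Prod.mk.injEq] at h
        ext1
        · ext1
          · exact h.1
          · ext1
            · exact h.2.1
            · exact h.2.2.1
        · exact h.2.2.2
      · simp
    have e2 : fibW w (fun ω => (ω.1.2.1, ω.1.2.2, ω.2)) (a.2.1, a.2.2, y) =
        fibW w (fun ω => ω.1.2) a.2 * ((κ a.2) {y}).toReal := by
      have h1 : fibW w (fun ω => (ω.1.2.1, ω.1.2.2, ω.2)) (a.2.1, a.2.2, y) =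
          ∑ b : (Fin n → Xty) × Mty × Jty, if b.2 = a.2 then w (b, y) else 0 := by
        unfold fibW
        rw [Fintype.sum_prod_type]
        refine Finset.sum_congr rfl fun b _ => ?_
        rw [Finset.sum_eq_single y]
        · simp [Prod.ext_iff]
        · intro c _ hc
          simp [hc]
        · simp
      have h2 : fibW w (fun ω => ω.1.2) a.2 =
          ∑ b : (Fin n → Xty) × Mty × Jty, if b.2 = a.2 then fibW w Prod.fst b else 0 := by
        unfold fibW
        rw [Fintype.sum_prod_type]
        refine Finset.sum_congr rfl fun b _ => ?_
        split_ifs with hb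
        · rw [Fintype.sum_prod_type, Finset.sum_eq_single b] <;> simp +contextual
        · simp
      rw [h1, h2, Finset.sum_mul]
      refine Finset.sum_congr rfl fun b _ => ?_
      split_ifs with hb
      · rw [lw, hb]
      · simp
    simp only [e1, e2, lw a y]
    ring_nf
  -- (2) the source is i.i.d. and independent of J
  have s2 : entW w (fun ω => ω.1.1) = ∑ t, entW w (fun ω => ω.1.1 t) := by
    refine entW_indep_tuple hw _ fun x => ?_
    rw [lX]
    exact Finset.prod_congr rfl fun t _ => (lXt t _).symm
  have s2' : entW w (fun ω => (ω.1.1, ω.1.2.2)) + entW w (fun _ => ()) =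
      entW w (fun ω => ω.1.1) + entW w (fun ω => ω.1.2.2) := by
    refine entW_add_eq hw _ _ _ _ fun ω _ => ?_
    rw [lXJ, lX, lJ, fibW_const, hw1, mul_one]
  have e0 : entW w (fun _ => ()) = 0 := by
    unfold entW; simp [fibW_const, hw1]
  -- (3)
  have s3 : ∀ t, entW w (fun ω => (ω.1.1 t, (ω.1.2.1, ω.1.2.2, ω.2)))
      - entW w (fun ω => (ω.1.2.1, ω.1.2.2, ω.2)) ≤
      entW w (fun ω => ((ω.1.2.1, ω.1.2.2, prefixOf ω.2 t), ω.1.1 t)) -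
      entW w (fun ω => (ω.1.2.1, ω.1.2.2, prefixOf ω.2 t)) := by
    intro t
    have h := entW_submod hw (fun ω => ω.1.1 t) (fun ω => (ω.1.2.1, ω.1.2.2, ω.2))
      (fun ω => (ω.1.2.1, ω.1.2.2, prefixOf ω.2 t))
    have h1 := entW_mono hw (fun ω => (ω.1.1 t, (ω.1.2.1, ω.1.2.2, ω.2)))
      (fun ω => (ω.1.1 t, (ω.1.2.1, ω.1.2.2, ω.2), (ω.1.2.1, ω.1.2.2, prefixOf ω.2 t)))
      (by intro a b; simp only [Prod.mk.injEq]; tauto)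
    have h2 := entW_mono hw (fun ω => ((ω.1.2.1, ω.1.2.2, ω.2), (ω.1.2.1, ω.1.2.2, prefixOf ω.2 t)))
      (fun ω => (ω.1.2.1, ω.1.2.2, ω.2))
      (by
        intro a b; simp only [Prod.mk.injEq]
        rintro ⟨h1, h2, h3⟩
        simp [h1, h2, h3])
    have h3 := entW_mono hw (fun ω => (ω.1.1 t, (ω.1.2.1, ω.1.2.2, prefixOf ω.2 t)))
      (fun ω => ((ω.1.2.1, ω.1.2.2, prefixOf ω.2 t), ω.1.1 t))
      (by intro a b; simp only [Prod.mk.injEq]; tauto)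
    linarith
  -- (4)
  have s4 := entW_tuple_le hw (fun ω => ω.1.1) (fun ω => (ω.1.2.1, ω.1.2.2, ω.2))
  have s34 := s4.trans (Finset.sum_le_sum fun t _ => s3 t)
  -- (6)
  have s6 : entW w (fun ω => (ω.1.1, ω.1.2.2)) ≤ entW w (fun ω => ω.1) :=
    entW_mono hw _ _ (by intro a b h; simp [h])
  have s6' : entW w (fun ω => ω.1.2) ≤ entW w (fun ω => ω.1.2.1) + entW w (fun ω => ω.1.2.2) :=
    entW_pair_le hw hw1 (fun ω => ω.1.2.1) (fun ω => ω.1.2.2)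
  -- time sharing
  have hw' : (fun x : (((Fin n → Xty) × Mty × Jty) × (Fin n → Xty)) × Fin n =>
      ((μ.prod (unif (Fin n))) {x}).toReal) = fun x => w x.1 * (n : ℝ)⁻¹ := by
    funext x
    obtain ⟨x, t⟩ := x
    rw [← Set.singleton_prod_singleton, Measure.prod_prod, ENNReal.toReal_mul]
    simp [unif, hwdef]
  have t1 := entW_time hn hw hw1
    (fun x => (x.1.1.2.1, x.1.1.2.2, x.2, prefixOf x.1.2 x.2))
    (fun t ω => (ω.1.2.1, ω.1.2.2, prefixOf ω.2 t))
    (by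
      intro ω t ω' t'
      simp only [Prod.mk.injEq]
      constructor
      · rintro ⟨h1, h2, rfl, h3⟩; exact ⟨rfl, h1, h2, h3⟩
      · rintro ⟨rfl, h1, h2, h3⟩; exact ⟨h1, h2, rfl, h3⟩)
  have t2 := entW_time hn hw hw1
    (fun x => ((x.1.1.2.1, x.1.1.2.2, x.2, prefixOf x.1.2 x.2), x.1.1.1 x.2))
    (fun t ω => ((ω.1.2.1, ω.1.2.2, prefixOf ω.2 t), ω.1.1 t))
    (by
      intro ω t ω' t'
      simp only [Prod.mk.injEq]
      constructor
      · rintro ⟨⟨h1, h2, rfl, h3⟩, h4⟩; exact ⟨rfl, ⟨h1, h2, h3⟩, h4⟩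
      · rintro ⟨rfl, ⟨h1, h2, h3⟩, h4⟩; exact ⟨⟨h1, h2, rfl, h3⟩, h4⟩)
  have t3 := entW_time_id (w := w) hn (fun ω => ω.1.1) (fun x => (p {x}).toReal) lXt
  rw [entropy_bridge, ← hwdef] at hH
  have hlog : 0 < Real.log 2 := Real.log_pos (by norm_num)
  unfold mutualInfo
  rw [Measure.map_map (measurable_of_finite _) (measurable_of_finite _),
    Measure.map_map (measurable_of_finite _) (measurable_of_finite _)]
  simp only [Function.comp_def]
  rw [entropy_bridge, entropy_bridge, entropy_bridge, hw', t1, t2, t3, ← s2, ← add_div, ← sub_div,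
    div_le_iff₀ hlog]
  rw [div_le_iff₀ hlog] at hH
  rw [Finset.sum_sub_distrib] at s34
  have fin : entW w (fun ω => ω.1.1) -
      (∑ t, entW w (fun ω => ((ω.1.2.1, ω.1.2.2, prefixOf ω.2 t), ω.1.1 t)) -
        ∑ t, entW w (fun ω => (ω.1.2.1, ω.1.2.2, prefixOf ω.2 t))) ≤ n * R * Real.log 2 := by
    linarith
  have fin2 := mul_le_mul_of_nonneg_left fin (inv_nonneg.2 hn'.le)
  have : (n : ℝ)⁻¹ * (n * R * Real.log 2) = R * Real.log 2 := by field_simp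
  rw [this] at fin2
  linarith
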